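/- Let 𝒫 be a simple type system on Ω that is either multinuclear or atomic branching quasinuclear. Then Stab_V(𝒫) is a maximal subgroup of Thompson's group V. -/

import Mathlib

/-- Addresses: finite words over the alphabet `{0,1}` (`Bool`). -/
abbrev Addr : Type := List Bool

/-- Cantor space: infinite words over the alphabet `{0,1}`. -/
abbrev Cantor : Type := ℕ → Bool

/-- Prepend the finite word `α` to the infinite word `w`. -/
def wcat (α : Addr) (w : Cantor) : Cantor := fun n =>
  if h : n < α.length then α.get ⟨n, h⟩ else w (n - α.length)

/-- The cone of the address `α`: the set of infinite words having `α` as a prefix. -/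
def cone (α : Addr) : Set Cantor := Set.range (wcat α)

/-- `g` is a prefix substitution map: there are partitions of Cantor space into cones
`(A i)𝔠` and `(B i)𝔠` such that `g` maps `(A i) w` to `(B i) w`. -/
def IsPrefixSubst (g : Equiv.Perm Cantor) : Prop :=
  ∃ (n : ℕ) (A B : Fin n → Addr),
    (∀ i j, i ≠ j → Disjoint (cone (A i)) (cone (A j))) ∧
    (⋃ i, cone (A i)) = Set.univ ∧
    (∀ i j, i ≠ j → Disjoint (cone (B i)) (cone (B j))) ∧
    (⋃ i, cone (B i)) = Set.univ ∧
    (∀ i w, g (wcat (A i) w) = wcat (B i) w)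

/-- Thompson's group `V`, as the set of prefix substitution maps inside `Equiv.Perm Cantor`. -/
def VSet : Set (Equiv.Perm Cantor) := { g | IsPrefixSubst g }

/-- `α ^ g = β` : `g` maps the cone of `α` onto the cone of `β` by the prefix
substitution `α ↦ β`. -/
def actsOn (g : Equiv.Perm Cantor) (α β : Addr) : Prop :=
  ∀ w, g (wcat α w) = wcat β w

/-- A subset of `Equiv.Perm Cantor` that is closed under the group operations. -/
def IsSubgroupSet (M : Set (Equiv.Perm Cantor)) : Prop :=
  (1 : Equiv.Perm Cantor) ∈ M ∧ (∀ g ∈ M, ∀ h ∈ M, g * h ∈ M) ∧ ∀ g ∈ M, g⁻¹ ∈ M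

/-- `M` is a maximal subgroup of Thompson's group `V`. -/
def IsMaximalSubgroupOfV (M : Set (Equiv.Perm Cantor)) : Prop :=
  IsSubgroupSet M ∧ M ⊆ VSet ∧ M ≠ VSet ∧
    ∀ H : Set (Equiv.Perm Cantor),
      IsSubgroupSet H → M ⊆ H → H ⊆ VSet → H = M ∨ H = VSet

/-- A relation on addresses is coherent if `α ∼ β` implies `α0 ∼ β0` and `α1 ∼ β1`. -/
def Coherent (r : Addr → Addr → Prop) : Prop :=
  ∀ α β, r α β → r (α ++ [false]) (β ++ [false]) ∧ r (α ++ [true]) (β ++ [true])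

/-- A relation on addresses is reduced if `α0 ∼ β0` and `α1 ∼ β1` imply `α ∼ β`. -/
def Reduced (r : Addr → Addr → Prop) : Prop :=
  ∀ α β, r (α ++ [false]) (β ++ [false]) → r (α ++ [true]) (β ++ [true]) → r α β

/-- A type system: a coherent and reduced equivalence relation on addresses
(identified with the partition of `Ω` into its classes). -/
def IsTypeSystem (r : Addr → Addr → Prop) : Prop :=
  Equivalence r ∧ Coherent r ∧ Reduced r

/-- `g` fixes the parts of `r`: for all but finitely many addresses `α`, the image
`α ^ g` is defined and equivalent to `α`. -/
def FixesParts (r : Addr → Addr → Prop) (g : Equiv.Perm Cantor) : Prop :=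
  { α : Addr | ¬ ∃ β, actsOn g α β ∧ r α β }.Finite

/-- `g` stabilizes `r`: on some cofinite set of addresses, `α ^ g` is defined and `g`
preserves equivalence and inequivalence of addresses. -/
def Stabilizes (r : Addr → Addr → Prop) (g : Equiv.Perm Cantor) : Prop :=
  ∃ Ω₀ : Set Addr, Ω₀ᶜ.Finite ∧ (∀ α ∈ Ω₀, ∃ β, actsOn g α β) ∧
    ∀ α ∈ Ω₀, ∀ α' ∈ Ω₀, ∀ β β', actsOn g α β → actsOn g α' β' → (r α α' ↔ r β β')

/-- `Fix_V(𝒫)`: the elements of Thompson's group `V` fixing the parts of `r`. -/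
def FixSet (r : Addr → Addr → Prop) : Set (Equiv.Perm Cantor) :=
  { g | IsPrefixSubst g ∧ FixesParts r g }

/-- `Stab_V(𝒫)`: the elements of Thompson's group `V` stabilizing `r`. -/
def StabSet (r : Addr → Addr → Prop) : Set (Equiv.Perm Cantor) :=
  { g | IsPrefixSubst g ∧ Stabilizes r g }

/-- The type system of `s` is a quotient of that of `r`. -/
def IsQuotientOf (s r : Addr → Addr → Prop) : Prop :=
  IsTypeSystem s ∧ ∀ α β, r α β → s α β

/-- A simple type system: the universal relation is a proper quotient, and every
quotient is either the type system itself or the universal one. -/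
def SimpleTS (r : Addr → Addr → Prop) : Prop :=
  IsTypeSystem r ∧ (∃ α β : Addr, ¬ r α β) ∧
    ∀ s : Addr → Addr → Prop, IsQuotientOf s r →
      (∀ α β, s α β ↔ r α β) ∨ ∀ α β, s α β

/-- The type (equivalence class) of the address `α`. -/
def typeOf (r : Addr → Addr → Prop) (α : Addr) : Set Addr := { β | r α β }

/-- `S` is a union of `r`-classes, i.e. a set of types of the type system. -/
def Saturated (r : Addr → Addr → Prop) (S : Set Addr) : Prop :=
  ∀ α ∈ S, ∀ β, r α β → β ∈ S

/-- `S` is child-closed: with each address (type) it contains both of its children. -/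
def ChildClosed (S : Set Addr) : Prop :=
  ∀ α ∈ S, α ++ [false] ∈ S ∧ α ++ [true] ∈ S

/-- The word `γ` determines a path through `S` from (the type of) `α`. -/
def PathThrough (S : Set Addr) (α γ : Addr) : Prop :=
  ∀ ζ : Addr, ζ <+: γ → α ++ ζ ∈ S

/-- `S` is strongly connected. -/
def StronglyConnected (r : Addr → Addr → Prop) (S : Set Addr) : Prop :=
  ∀ α ∈ S, ∀ β ∈ S, ∃ γ : Addr, γ ≠ [] ∧ PathThrough S α γ ∧ r (α ++ γ) β

/-- A nucleus: a (nonempty) child-closed and strongly connected set of types. -/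
def IsNucleus (r : Addr → Addr → Prop) (S : Set Addr) : Prop :=
  S.Nonempty ∧ Saturated r S ∧ ChildClosed S ∧ StronglyConnected r S

/-- `S` consists of exactly one type. -/
def IsSingleType (r : Addr → Addr → Prop) (S : Set Addr) : Prop :=
  ∃ α : Addr, S = typeOf r α

/-- A multinuclear type system: finitely many pairwise disjoint nuclei containing the
types of all sufficiently long addresses. -/
def Multinuclear (r : Addr → Addr → Prop) : Prop :=
  ∃ (k : ℕ) (Q : Fin k → Set Addr), 0 < k ∧ (∀ i, IsNucleus r (Q i)) ∧
    (∀ i j, i ≠ j → Disjoint (Q i) (Q j)) ∧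
    ∃ t : ℕ, 0 < t ∧ ∀ α : Addr, t ≤ α.length → ∃ i, α ∈ Q i

/-- A nuclear type system: a single nucleus containing the types of all sufficiently
long addresses. -/
def Nuclear (r : Addr → Addr → Prop) : Prop :=
  ∃ Q : Set Addr, IsNucleus r Q ∧ ∃ t : ℕ, 0 < t ∧ ∀ α : Addr, t ≤ α.length → α ∈ Q

/-- An atomic binuclear type system: two disjoint singleton nuclei containing the types
of all sufficiently long addresses. -/
def AtomicBinuclear (r : Addr → Addr → Prop) : Prop :=
  ∃ Q₁ Q₂ : Set Addr, IsNucleus r Q₁ ∧ IsNucleus r Q₂ ∧ Disjoint Q₁ Q₂ ∧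
    IsSingleType r Q₁ ∧ IsSingleType r Q₂ ∧
    ∃ t : ℕ, 0 < t ∧ ∀ α : Addr, t ≤ α.length → α ∈ Q₁ ∪ Q₂

/-- The data `(𝒬, ℛ)` witnessing that a type system is quasinuclear. -/
def QuasinuclearData (r : Addr → Addr → Prop) (Q R : Set Addr) : Prop :=
  Q.Nonempty ∧ R.Nonempty ∧ Saturated r Q ∧ Saturated r R ∧ Disjoint Q R ∧
    (∃ t : ℕ, 0 < t ∧ ∀ α : Addr, t ≤ α.length → α ∈ Q ∪ R) ∧
    IsNucleus r R ∧ StronglyConnected r Q ∧ ChildClosed (Q ∪ R) ∧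
    ∀ α ∈ Q, ∀ β ∈ R, ∃ γ : Addr, r (α ++ γ) β

/-- A quasinuclear type system. -/
def Quasinuclear (r : Addr → Addr → Prop) : Prop :=
  ∃ Q R : Set Addr, QuasinuclearData r Q R

/-- `𝒬†`: the types of `𝒬` both of whose children lie in `𝒬`. -/
def QDagger (Q : Set Addr) : Set Addr :=
  { α ∈ Q | α ++ [false] ∈ Q ∧ α ++ [true] ∈ Q }

/-- An atomic quasinuclear type system: the nucleus `ℛ` is a single type. -/
def AtomicQuasinuclear (r : Addr → Addr → Prop) : Prop :=
  ∃ Q R : Set Addr, QuasinuclearData r Q R ∧ IsSingleType r R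

/-!
In the type systems at hand every long address recurs at two incomparable addresses below it, so
below it there are representatives of its type avoiding any finite set of sufficiently small cones.

Let `H` be a group with `Stab_V(𝒫) ≤ H ≤ V`. It contains the swaps of cones of equivalent
addresses. Call `a` and `b` swap related if for every `c` all cones of the types of `ac` and `bc`
are swapped by `H`. Transitivity is the point at which room is needed: the swap of `x` and `z` is
the conjugate of the swap of `x` and `y` by that of `y` and `z`, provided `y` is disjoint from both.
Swap relatedness is thus a quotient of `𝒫`, and by simplicity it is universal or equal to `𝒫`. In
the first case `H` contains all cone swaps, which generate `V`. In the second case conjugation by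
`h ∈ H` carries swaps of equivalent cones to swaps in `H`, so `h` preserves `𝒫`.

If `Stab_V(𝒫)` were `V`, it would contain the swap of a long address with an arbitrary one that
fixes a third address equivalent to the first; hence all addresses would be equivalent.
-/

/-! ### Words and cones -/

lemma wcat_append (a b : Addr) (w : Cantor) : wcat (a ++ b) w = wcat a (wcat b w) := by
  funext n
  simp only [wcat, List.get_eq_getElem, List.length_append, List.getElem_append]
  split_ifs <;> first | rfl | omega | simp [Nat.sub_sub]

lemma wcat_apply_length_add (a : Addr) (w : Cantor) (n : ℕ) : wcat a w (a.length + n) = w n := by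
  simp [wcat]

lemma wcat_injective (a : Addr) : Function.Injective (wcat a) := fun w w' h => by
  funext n
  rw [← wcat_apply_length_add a w, h, wcat_apply_length_add]

lemma wcat_mem_cone (a : Addr) (w : Cantor) : wcat a w ∈ cone a := ⟨w, rfl⟩

lemma mem_cone_iff {a : Addr} {w : Cantor} :
    w ∈ cone a ↔ ∀ (i : ℕ) (hi : i < a.length), a[i] = w i := by
  constructor
  · rintro ⟨v, rfl⟩ i hi
    simp [wcat, hi]
  · refine fun h => ⟨fun n => w (a.length + n), funext fun n => ?_⟩
    by_cases hn : n < a.length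
    · simp [wcat, hn, h]
    · simp [wcat, hn, Nat.add_sub_of_le (not_lt.mp hn)]

lemma mem_cone_ofFn (n : ℕ) (w : Cantor) : w ∈ cone (List.ofFn fun i : Fin n => w i) :=
  mem_cone_iff.mpr fun i hi => by simp

lemma exists_eq_wcat_singleton (w : Cantor) : ∃ e v, w = wcat [e] v :=
  have ⟨v, hv⟩ := mem_cone_ofFn 1 w
  ⟨w 0, v, hv.symm⟩

lemma prefix_of_mem_cone {a b : Addr} {w : Cantor} (hl : a.length ≤ b.length)
    (ha : w ∈ cone a) (hb : w ∈ cone b) : a <+: b :=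
  List.prefix_iff_getElem.mpr
    ⟨hl, fun i hi => (mem_cone_iff.mp ha i hi).trans (mem_cone_iff.mp hb i _).symm⟩

lemma cone_append_subset (a c : Addr) : cone (a ++ c) ⊆ cone a := by
  rintro _ ⟨w, rfl⟩
  exact ⟨wcat c w, (wcat_append a c w).symm⟩

lemma cone_subset_cone_iff {a b : Addr} : cone b ⊆ cone a ↔ a <+: b := by
  refine ⟨fun h => ?_, fun ⟨c, hc⟩ => hc ▸ cone_append_subset a c⟩
  rcases le_total a.length b.length with hl | hl
  · exact prefix_of_mem_cone hl (h (wcat_mem_cone b fun _ => false)) (wcat_mem_cone _ _)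
  obtain ⟨c, rfl⟩ := prefix_of_mem_cone hl (wcat_mem_cone b fun _ => false)
    (h (wcat_mem_cone b _))
  rcases c with _ | ⟨x, c⟩
  · simp
  obtain ⟨v, hv⟩ := h (wcat_mem_cone b fun _ => !x)
  rw [wcat_append] at hv
  simpa [wcat] using congrFun (wcat_injective b hv) 0

lemma cone_injective : Function.Injective cone := fun _ _ h =>
  (cone_subset_cone_iff.mp h.ge).eq_of_length_le (cone_subset_cone_iff.mp h.le).length_le

lemma cone_eq_union_children (a : Addr) :
    cone a = cone (a ++ [false]) ∪ cone (a ++ [true]) := by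
  refine Set.Subset.antisymm ?_
    (Set.union_subset (cone_append_subset a _) (cone_append_subset a _))
  rintro _ ⟨w, rfl⟩
  obtain ⟨e, v, rfl⟩ := exists_eq_wcat_singleton w
  rw [← wcat_append]
  cases e
  exacts [.inl (wcat_mem_cone _ _), .inr (wcat_mem_cone _ _)]

/-- Incomparability in the prefix order; equivalently, the two cones are disjoint. -/
abbrev Incomp (a b : Addr) : Prop := IncompRel (· <+: ·) a b

lemma incomp_of_not_prefix {a b : Addr} (hl : a.length ≤ b.length) (h : ¬ a <+: b) :
    Incomp a b :=
  ⟨h, fun hba => h (hba.eq_of_length_le hl ▸ List.prefix_rfl)⟩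

lemma incomp_iff_disjoint_cone {a b : Addr} : Incomp a b ↔ Disjoint (cone a) (cone b) := by
  refine ⟨fun h => Set.disjoint_left.mpr fun w ha hb => ?_,
    fun h => ⟨fun hab => ?_, fun hba => ?_⟩⟩
  · rcases le_total a.length b.length with hl | hl
    · exact h.1 (prefix_of_mem_cone hl ha hb)
    · exact h.2 (prefix_of_mem_cone hl hb ha)
  · exact Set.disjoint_left.mp h
      (cone_subset_cone_iff.mpr hab (wcat_mem_cone b fun _ => false)) (wcat_mem_cone _ _)
  · exact Set.disjoint_left.mp h (wcat_mem_cone a fun _ => false)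
      (cone_subset_cone_iff.mpr hba (wcat_mem_cone _ _))

lemma Incomp.append {a b : Addr} (h : Incomp a b) (c d : Addr) : Incomp (a ++ c) (b ++ d) :=
  incomp_iff_disjoint_cone.mpr <|
    (incomp_iff_disjoint_cone.mp h).mono (cone_append_subset a c) (cone_append_subset b d)

lemma Incomp.append_left {a b : Addr} (h : Incomp a b) (c : Addr) : Incomp (a ++ c) b := by
  simpa using h.append c []

lemma incomp_append_left_iff {a u v : Addr} : Incomp (a ++ u) (a ++ v) ↔ Incomp u v := by
  simp only [Incomp, IncompRel, List.prefix_append_right_inj]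

lemma incomp_children (a : Addr) : Incomp (a ++ [false]) (a ++ [true]) := by
  rw [incomp_append_left_iff]
  simp [IncompRel]

/-! ### The partial action on addresses -/

section Action

variable {g h : Equiv.Perm Cantor} {a b c d : Addr}

lemma actsOn_one (a : Addr) : actsOn 1 a a := fun _ => rfl

lemma actsOn.mul (hg : actsOn g b c) (hh : actsOn h a b) : actsOn (g * h) a c := fun w => by
  rw [Equiv.Perm.mul_apply, hh, hg]

lemma actsOn.inv (hg : actsOn g a b) : actsOn g⁻¹ b a := fun w => by
  rw [Equiv.Perm.inv_eq_iff_eq, hg]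

lemma actsOn.append (hg : actsOn g a b) (c : Addr) : actsOn g (a ++ c) (b ++ c) := fun w => by
  rw [wcat_append, wcat_append, hg]

lemma actsOn.image_cone (hg : actsOn g a b) : g '' cone a = cone b := by
  rw [cone, cone, ← Set.range_comp]
  exact congrArg Set.range (funext hg)

lemma actsOn.apply_mem_cone_iff (hg : actsOn g a b) {w : Cantor} :
    g w ∈ cone b ↔ w ∈ cone a := by
  rw [← hg.image_cone, g.injective.mem_set_image]

lemma actsOn.unique (hb : actsOn g a b) (hc : actsOn g a c) : b = c :=
  cone_injective (hb.image_cone.symm.trans hc.image_cone)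

lemma actsOn.incomp (ha : actsOn g a c) (hb : actsOn g b d) (h : Incomp a b) : Incomp c d := by
  rw [incomp_iff_disjoint_cone] at h ⊢
  rwa [← ha.image_cone, ← hb.image_cone, Set.disjoint_image_iff g.injective]

lemma reduced_actsOn (g : Equiv.Perm Cantor) : Reduced (actsOn g) := fun a b h₀ h₁ w => by
  obtain ⟨e, v, rfl⟩ := exists_eq_wcat_singleton w
  rw [← wcat_append, ← wcat_append]
  cases e
  exacts [h₀ v, h₁ v]

lemma actsOn.length_le {n : ℕ} (hn : ∀ x : Addr, n ≤ x.length → ∃ y, actsOn g x y)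
    (h : actsOn g a b) : a.length ≤ b.length + n := by
  rcases le_total a.length n with hl | hl
  · omega
  obtain ⟨y, hy⟩ := hn (a.take n) (by simp [hl])
  have hab := hy.append (a.drop n)
  rw [List.take_append_drop] at hab
  simp only [h.unique hab, List.length_append, List.length_drop]
  omega

end Action

/-! ### Relations on addresses -/

lemma Coherent.append {r : Addr → Addr → Prop} (hr : Coherent r) {a b : Addr} (h : r a b)
    (c : Addr) : r (a ++ c) (b ++ c) := by
  induction c generalizing a b with
  | nil => simpa only [List.append_nil] using h
  | cons e c ih =>
    rw [List.append_cons a, List.append_cons b]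
    cases e
    exacts [ih (hr a b h).1, ih (hr a b h).2]

lemma Reduced.of_forall_append {r : Addr → Addr → Prop} (hr : Reduced r) {a b : Addr} (m : ℕ)
    (h : ∀ c : Addr, c.length = m → r (a ++ c) (b ++ c)) : r a b := by
  induction m generalizing a b with
  | zero => simpa only [List.append_nil] using h [] rfl
  | succ m ih =>
    have hchild (e : Bool) : r (a ++ [e]) (b ++ [e]) := ih fun c hc => by
      simpa only [List.append_assoc, List.singleton_append] using h (e :: c) (by simp [hc])
    exact hr a b (hchild false) (hchild true)

namespace IsTypeSystem

variable {r : Addr → Addr → Prop} {a b c : Addr}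

lemma refl (hr : IsTypeSystem r) (a : Addr) : r a a := hr.1.refl a

lemma symm (hr : IsTypeSystem r) (h : r a b) : r b a := hr.1.symm h

lemma trans (hr : IsTypeSystem r) (hab : r a b) (hbc : r b c) : r a c := hr.1.trans hab hbc

lemma append (hr : IsTypeSystem r) (h : r a b) (c : Addr) : r (a ++ c) (b ++ c) :=
  hr.2.1.append h c

lemma of_forall_append (hr : IsTypeSystem r) (m : ℕ)
    (h : ∀ c : Addr, c.length = m → r (a ++ c) (b ++ c)) : r a b :=
  hr.2.2.of_forall_append m h

end IsTypeSystem

/-! ### Complete prefix codes and Thompson's group -/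

/-- A complete prefix code: the cones of the words in `S` partition Cantor space. -/
def IsCode (S : Finset Addr) : Prop := ∀ w, ∃! x, x ∈ S ∧ w ∈ cone x

namespace IsCode

variable {S : Finset Addr} {g : Equiv.Perm Cantor}

lemma incomp (hS : IsCode S) {x y : Addr} (hx : x ∈ S) (hy : y ∈ S) (hxy : x ≠ y) :
    Incomp x y :=
  incomp_iff_disjoint_cone.mpr <| Set.disjoint_left.mpr fun w hwx hwy =>
    hxy ((hS w).unique ⟨hx, hwx⟩ ⟨hy, hwy⟩)

lemma image (hS : IsCode S) {f : Addr → Addr} (hf : ∀ x ∈ S, actsOn g x (f x)) :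
    IsCode (S.image f) := fun w => by
  obtain ⟨v, rfl⟩ := g.surjective w
  obtain ⟨x, ⟨hx, hv⟩, huniq⟩ := hS v
  refine ⟨f x, ⟨Finset.mem_image_of_mem f hx, (hf x hx).apply_mem_cone_iff.mpr hv⟩, ?_⟩
  rintro y ⟨hy, hvy⟩
  obtain ⟨z, hz, rfl⟩ := Finset.mem_image.mp hy
  rw [huniq z ⟨hz, (hf z hz).apply_mem_cone_iff.mp hvy⟩]

end IsCode

lemma isCode_length (n : ℕ) : IsCode (List.finite_length_eq Bool n).toFinset := fun w => by
  have hw := mem_cone_ofFn n w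
  refine ⟨_, ⟨by simp, hw⟩, ?_⟩
  rintro y ⟨hy, hwy⟩
  have hlen : y.length = (List.ofFn fun i : Fin n => w i).length := by simpa using hy
  exact (prefix_of_mem_cone hlen.le hwy hw).eq_of_length hlen

lemma isPrefixSubst_iff_exists_isCode {g : Equiv.Perm Cantor} :
    IsPrefixSubst g ↔ ∃ S, IsCode S ∧ ∀ x ∈ S, ∃ y, actsOn g x y := by
  constructor
  · rintro ⟨n, A, B, hdisj, hcov, -, -, hAB⟩
    refine ⟨Finset.univ.image A, fun w => ?_, by simpa using fun i => ⟨B i, hAB i⟩⟩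
    obtain ⟨i, hi⟩ := Set.mem_iUnion.mp (hcov.ge (Set.mem_univ w))
    refine ⟨A i, ⟨Finset.mem_image_of_mem A (Finset.mem_univ i), hi⟩, ?_⟩
    rintro y ⟨hy, hwy⟩
    obtain ⟨j, -, rfl⟩ := Finset.mem_image.mp hy
    by_contra hne
    exact Set.disjoint_left.mp (hdisj j i fun hji => hne (hji ▸ rfl)) hwy hi
  · rintro ⟨S, hS, hg⟩
    choose! f hf using hg
    have himg := hS.image hf
    have hmem (i : Fin S.card) : (S.equivFin.symm i : Addr) ∈ S := (S.equivFin.symm i).2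
    have hinc {i j : Fin S.card} (hij : i ≠ j) :
        Incomp (S.equivFin.symm i : Addr) (S.equivFin.symm j) :=
      hS.incomp (hmem i) (hmem j) fun h => hij (S.equivFin.symm.injective (Subtype.ext h))
    refine ⟨S.card, fun i => S.equivFin.symm i, fun i => f (S.equivFin.symm i),
      fun i j hij => incomp_iff_disjoint_cone.mp (hinc hij), ?_,
      fun i j hij => incomp_iff_disjoint_cone.mp
        ((hf _ (hmem i)).incomp (hf _ (hmem j)) (hinc hij)), ?_, fun i => hf _ (hmem i)⟩
    · refine Set.iUnion_eq_univ_iff.mpr fun w => ?_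
      obtain ⟨x, ⟨hx, hw⟩, -⟩ := hS w
      exact ⟨S.equivFin ⟨x, hx⟩, by simpa using hw⟩
    · refine Set.iUnion_eq_univ_iff.mpr fun w => ?_
      obtain ⟨y, ⟨hy, hw⟩, -⟩ := himg w
      obtain ⟨x, hx, rfl⟩ := Finset.mem_image.mp hy
      exact ⟨S.equivFin ⟨x, hx⟩, by simpa using hw⟩

lemma isPrefixSubst_iff_exists_length {g : Equiv.Perm Cantor} :
    IsPrefixSubst g ↔ ∃ n, ∀ a : Addr, n ≤ a.length → ∃ b, actsOn g a b := by
  rw [isPrefixSubst_iff_exists_isCode]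
  constructor
  · rintro ⟨S, hS, hg⟩
    refine ⟨S.sup List.length, fun a ha => ?_⟩
    obtain ⟨x, ⟨hx, hw⟩, -⟩ := hS (wcat a fun _ => false)
    obtain ⟨c, rfl⟩ := prefix_of_mem_cone ((Finset.le_sup hx).trans ha) hw (wcat_mem_cone _ _)
    exact (hg x hx).imp' (· ++ c) fun _ hy => hy.append c
  · rintro ⟨n, hn⟩
    refine ⟨_, isCode_length n, fun x hx => hn x (Eq.ge ?_)⟩
    simpa using hx

/-- Thompson's group `V`, as a bundled subgroup with carrier `VSet`. -/
def thompsonV : Subgroup (Equiv.Perm Cantor) where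
  carrier := VSet
  one_mem' := isPrefixSubst_iff_exists_length.mpr ⟨0, fun a _ => ⟨a, actsOn_one a⟩⟩
  mul_mem' {g h} hg hh := by
    obtain ⟨m, hm⟩ := isPrefixSubst_iff_exists_length.mp hg
    obtain ⟨n, hn⟩ := isPrefixSubst_iff_exists_length.mp hh
    refine isPrefixSubst_iff_exists_length.mpr ⟨m + n, fun a ha => ?_⟩
    obtain ⟨b, hb⟩ := hn a (by omega)
    obtain ⟨c, hc⟩ := hm b (by have := hb.length_le hn; omega)
    exact ⟨c, hc.mul hb⟩
  inv_mem' {g} hg := by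
    obtain ⟨S, hS, hg⟩ := isPrefixSubst_iff_exists_isCode.mp hg
    choose! f hf using hg
    exact isPrefixSubst_iff_exists_isCode.mpr
      ⟨_, hS.image hf, by simpa using fun x hx => ⟨x, (hf x hx).inv⟩⟩

lemma mem_thompsonV {g : Equiv.Perm Cantor} : g ∈ thompsonV ↔ IsPrefixSubst g := Iff.rfl

/-! ### Cone swaps -/

open Classical in
/-- The involution of Cantor space exchanging the cones of `a` and `b` by the prefix
substitutions `a ↔ b` and fixing all other points. Its junk value is the identity if `a` and `b`
are comparable. -/
noncomputable def coneSwap (a b : Addr) : Equiv.Perm Cantor :=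
  if h : Incomp a b then
    Equiv.Perm.viaEmbedding (Equiv.sumComm Cantor Cantor)
      ⟨Sum.elim (wcat a) (wcat b), (wcat_injective a).sumElim (wcat_injective b) fun v w =>
        (incomp_iff_disjoint_cone.mp h).ne_of_mem (wcat_mem_cone a v) (wcat_mem_cone b w)⟩
  else 1

section ConeSwap

variable {a b c x y z : Addr} {w : Cantor} {g : Equiv.Perm Cantor}
  {H : Subgroup (Equiv.Perm Cantor)}

lemma coneSwap_of_not_incomp (h : ¬ Incomp a b) : coneSwap a b = 1 := dif_neg h

lemma actsOn_coneSwap_left (h : Incomp a b) : actsOn (coneSwap a b) a b := fun w => by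
  rw [coneSwap, dif_pos h]
  exact Equiv.Perm.viaEmbedding_apply _ _ (Sum.inl w)

lemma actsOn_coneSwap_right (h : Incomp a b) : actsOn (coneSwap a b) b a := fun w => by
  rw [coneSwap, dif_pos h]
  exact Equiv.Perm.viaEmbedding_apply _ _ (Sum.inr w)

lemma coneSwap_apply_of_notMem (ha : w ∉ cone a) (hb : w ∉ cone b) : coneSwap a b w = w := by
  by_cases h : Incomp a b
  · rw [coneSwap, dif_pos h]
    refine Equiv.Perm.viaEmbedding_apply_of_notMem _ _ _ ?_
    rintro ⟨v | v, rfl⟩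
    exacts [ha (wcat_mem_cone a v), hb (wcat_mem_cone b v)]
  · rw [coneSwap_of_not_incomp h, Equiv.Perm.one_apply]

lemma actsOn_coneSwap_of_incomp (hca : Incomp c a) (hcb : Incomp c b) :
    actsOn (coneSwap a b) c c := fun w => by
  rw [incomp_iff_disjoint_cone, Set.disjoint_left] at hca hcb
  exact coneSwap_apply_of_notMem (hca (wcat_mem_cone c w)) (hcb (wcat_mem_cone c w))

lemma eq_coneSwap (h : Incomp a b) (hab : actsOn g a b) (hba : actsOn g b a)
    (hfix : ∀ w, w ∉ cone a → w ∉ cone b → g w = w) : g = coneSwap a b := by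
  ext1 w
  by_cases ha : w ∈ cone a
  · obtain ⟨v, rfl⟩ := ha
    rw [hab, actsOn_coneSwap_left h]
  by_cases hb : w ∈ cone b
  · obtain ⟨v, rfl⟩ := hb
    rw [hba, actsOn_coneSwap_right h]
  rw [hfix w ha hb, coneSwap_apply_of_notMem ha hb]

lemma coneSwap_comm (a b : Addr) : coneSwap a b = coneSwap b a := by
  by_cases h : Incomp a b
  · exact eq_coneSwap h.symm (actsOn_coneSwap_right h) (actsOn_coneSwap_left h)
      fun w hb ha => coneSwap_apply_of_notMem ha hb
  · rw [coneSwap_of_not_incomp h, coneSwap_of_not_incomp fun h' => h h'.symm]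

lemma mul_coneSwap_mul_inv (h : Incomp a b) (hax : actsOn g a x) (hby : actsOn g b y) :
    g * coneSwap a b * g⁻¹ = coneSwap x y := by
  refine eq_coneSwap (hax.incomp hby h) ((hby.mul (actsOn_coneSwap_left h)).mul hax.inv)
    ((hax.mul (actsOn_coneSwap_right h)).mul hby.inv) fun w hx hy => ?_
  obtain ⟨v, rfl⟩ := g.surjective w
  rw [hax.apply_mem_cone_iff] at hx
  rw [hby.apply_mem_cone_iff] at hy
  rw [Equiv.Perm.mul_apply, Equiv.Perm.inv_eq_iff_eq.mpr rfl, Equiv.Perm.mul_apply,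
    coneSwap_apply_of_notMem hx hy]

lemma coneSwap_mem_trans (hxy : Incomp x y) (hyz : Incomp y z) (h₁ : coneSwap x y ∈ H)
    (h₂ : coneSwap y z ∈ H) : coneSwap x z ∈ H := by
  by_cases hxz : Incomp x z
  · rw [← mul_coneSwap_mul_inv hyz (actsOn_coneSwap_right hxy)
      (actsOn_coneSwap_of_incomp hxz.symm hyz.symm)]
    exact H.mul_mem (H.mul_mem h₁ h₂) (H.inv_mem h₁)
  · exact coneSwap_of_not_incomp hxz ▸ H.one_mem

lemma coneSwap_eq_mul (h : Incomp a b) :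
    coneSwap a b =
      coneSwap (a ++ [false]) (b ++ [false]) * coneSwap (a ++ [true]) (b ++ [true]) := by
  have ab (c d : Addr) : Incomp (a ++ c) (b ++ d) := h.append c d
  have ba (c d : Addr) : Incomp (b ++ c) (a ++ d) := (ab d c).symm
  refine (eq_coneSwap h ?_ ?_ fun w ha hb => ?_).symm
  · exact reduced_actsOn _ _ _
      ((actsOn_coneSwap_left (ab _ _)).mul
        (actsOn_coneSwap_of_incomp (incomp_children a) (ab _ _)))
      ((actsOn_coneSwap_of_incomp (ba _ _) (incomp_children b).symm).mul
        (actsOn_coneSwap_left (ab _ _)))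
  · exact reduced_actsOn _ _ _
      ((actsOn_coneSwap_right (ab _ _)).mul
        (actsOn_coneSwap_of_incomp (ba _ _) (incomp_children b)))
      ((actsOn_coneSwap_of_incomp (incomp_children a).symm (ab _ _)).mul
        (actsOn_coneSwap_right (ab _ _)))
  · have ha' (c : Addr) : w ∉ cone (a ++ c) := mt (@cone_append_subset a c w) ha
    have hb' (c : Addr) : w ∉ cone (b ++ c) := mt (@cone_append_subset b c w) hb
    rw [Equiv.Perm.mul_apply, coneSwap_apply_of_notMem (ha' _) (hb' _),
      coneSwap_apply_of_notMem (ha' _) (hb' _)]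

lemma reduced_coneSwap_mem (H : Subgroup (Equiv.Perm Cantor)) :
    Reduced fun a b => coneSwap a b ∈ H := fun a b h₀ h₁ => by
  change coneSwap a b ∈ H
  by_cases h : Incomp a b
  · exact coneSwap_eq_mul h ▸ H.mul_mem h₀ h₁
  · exact coneSwap_of_not_incomp h ▸ H.one_mem

lemma exists_actsOn_coneSwap {r : Addr → Addr → Prop} (hr : IsTypeSystem r) (hab : r a b)
    (hax : a.length ≤ x.length) (hbx : b.length ≤ x.length) :
    ∃ y, actsOn (coneSwap a b) x y ∧ r x y := by
  by_cases h : Incomp a b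
  · by_cases ha : a <+: x
    · obtain ⟨c, rfl⟩ := ha
      exact ⟨b ++ c, (actsOn_coneSwap_left h).append c, hr.append hab c⟩
    by_cases hb : b <+: x
    · obtain ⟨c, rfl⟩ := hb
      exact ⟨a ++ c, (actsOn_coneSwap_right h).append c, hr.append (hr.symm hab) c⟩
    exact ⟨x, actsOn_coneSwap_of_incomp (incomp_of_not_prefix hax ha).symm
      (incomp_of_not_prefix hbx hb).symm, hr.refl x⟩
  · exact ⟨x, coneSwap_of_not_incomp h ▸ actsOn_one x, hr.refl x⟩

end ConeSwap

lemma coneSwap_mem_thompsonV (a b : Addr) : coneSwap a b ∈ thompsonV := by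
  have htriv : IsTypeSystem fun _ _ => True :=
    ⟨⟨fun _ => trivial, fun _ => trivial, fun _ _ => trivial⟩, fun _ _ _ => ⟨trivial, trivial⟩,
      fun _ _ _ _ => trivial⟩
  refine isPrefixSubst_iff_exists_length.mpr ⟨a.length + b.length, fun x hx => ?_⟩
  exact (exists_actsOn_coneSwap htriv trivial (by omega) (by omega)).imp fun _ hy => hy.1

/-! ### Cone swaps generate Thompson's group -/

lemma eq_one_of_actsOn_nil {g : Equiv.Perm Cantor} {b : Addr} (h : actsOn g [] b) : g = 1 := by
  have hnil : cone [] = Set.univ := Set.eq_univ_of_forall fun w => wcat_mem_cone [] w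
  have hb : b = [] := cone_injective <| by
    rw [← h.image_cone, hnil, Set.image_univ, g.surjective.range_eq]
  subst hb
  exact Equiv.ext h

namespace IsCode

variable {S : Finset Addr} {u : Addr} {H : Subgroup (Equiv.Perm Cantor)}

lemma exists_siblings (hS : IsCode S) (hnil : [] ∉ S) :
    ∃ u : Addr, u ++ [false] ∈ S ∧ u ++ [true] ∈ S := by
  obtain ⟨x₀, ⟨hx₀, -⟩, -⟩ := hS fun _ => false
  obtain ⟨x, hx, hmax⟩ := S.exists_max_image List.length ⟨x₀, hx₀⟩
  obtain rfl | ⟨u, e, rfl⟩ := x.eq_nil_or_concat'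
  · exact absurd hx hnil
  have hsib : u ++ [!e] ∈ S := by
    obtain ⟨y, ⟨hy, hw⟩, -⟩ := hS (wcat (u ++ [!e]) fun _ => false)
    have hpre : y <+: u ++ [!e] :=
      prefix_of_mem_cone (by simpa using hmax y hy) hw (wcat_mem_cone _ _)
    obtain rfl | hyu := List.prefix_concat_iff.mp hpre
    · exact hy
    have hne : y ≠ u ++ [e] := by
      rintro rfl
      simpa using hyu.length_le
    exact absurd (hyu.trans (List.prefix_append u _)) (hS.incomp hy hx hne).1
  cases e
  exacts [⟨u, hx, hsib⟩, ⟨u, hsib, hx⟩]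

lemma merge (hS : IsCode S) (h₀ : u ++ [false] ∈ S) (h₁ : u ++ [true] ∈ S) :
    IsCode (insert u (S \ {u ++ [false], u ++ [true]})) := fun w => by
  simp only [Finset.mem_insert, Finset.mem_sdiff, Finset.mem_singleton]
  obtain ⟨x, ⟨hx, hwx⟩, huniq⟩ := hS w
  by_cases hw : w ∈ cone u
  · refine ⟨u, ⟨.inl rfl, hw⟩, ?_⟩
    rintro y ⟨rfl | ⟨hy, hne⟩, hwy⟩
    · rfl
    rw [cone_eq_union_children] at hw
    have hyx := huniq y ⟨hy, hwy⟩
    refine absurd (hw.imp (fun h => ?_) fun h => ?_) hne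
    exacts [hyx.trans (huniq _ ⟨h₀, h⟩).symm, hyx.trans (huniq _ ⟨h₁, h⟩).symm]
  · refine ⟨x, ⟨.inr ⟨hx, ?_⟩, hwx⟩, ?_⟩
    · rintro (rfl | rfl)
      exacts [hw (cone_append_subset _ _ hwx), hw (cone_append_subset _ _ hwx)]
    · rintro y ⟨rfl | ⟨hy, -⟩, hwy⟩
      exacts [absurd hwy hw, huniq y ⟨hy, hwy⟩]

lemma card_merge_lt (h₀ : u ++ [false] ∈ S) (h₁ : u ++ [true] ∈ S) :
    (insert u (S \ {u ++ [false], u ++ [true]})).card < S.card := by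
  have hsub : {u ++ [false], u ++ [true]} ⊆ S := by simp [Finset.insert_subset_iff, h₀, h₁]
  have htwo : ({u ++ [false], u ++ [true]} : Finset Addr).card = 2 := Finset.card_pair (by simp)
  have := Finset.card_insert_le u (S \ {u ++ [false], u ++ [true]})
  have := Finset.card_sdiff_add_card_eq_card hsub
  omega

lemma actsOn_coneSwap (hS : IsCode S) (x y z : S) :
    actsOn (coneSwap x y) z (Equiv.swap x y z : S) := by
  have hinc {p q : S} (h : p ≠ q) : Incomp (p : Addr) q :=
    hS.incomp p.2 q.2 (Subtype.coe_injective.ne h)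
  obtain rfl | hxy := eq_or_ne x y
  · rw [coneSwap_of_not_incomp fun h => h.1 List.prefix_rfl, Equiv.swap_self]
    exact actsOn_one _
  obtain rfl | hzx := eq_or_ne z x
  · rw [Equiv.swap_apply_left]
    exact actsOn_coneSwap_left (hinc hxy)
  obtain rfl | hzy := eq_or_ne z y
  · rw [Equiv.swap_apply_right]
    exact actsOn_coneSwap_right (hinc hxy)
  rw [Equiv.swap_apply_of_ne_of_ne hzx hzy]
  exact actsOn_coneSwap_of_incomp (hinc hzx) (hinc hzy)

lemma exists_mem_actsOn_perm (hS : IsCode S) (hH : ∀ a b, coneSwap a b ∈ H)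
    (σ : Equiv.Perm S) : ∃ h ∈ H, ∀ x : S, actsOn h x (σ x) := by
  induction σ using Equiv.Perm.swap_induction_on with
  | one => exact ⟨1, H.one_mem, fun x => actsOn_one x⟩
  | swap_mul σ x y _ ih =>
    obtain ⟨h, hh, hσ⟩ := ih
    exact ⟨coneSwap x y * h, H.mul_mem (hH x y) hh,
      fun z => (hS.actsOn_coneSwap x y (σ z)).mul (hσ z)⟩

lemma exists_mem_actsOn_siblings (hS : IsCode S) (hH : ∀ a b, coneSwap a b ∈ H) {p q v : Addr}
    (hp : p ∈ S) (hq : q ∈ S) (hpq : p ≠ q) (h₀ : v ++ [false] ∈ S) (h₁ : v ++ [true] ∈ S) :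
    ∃ h ∈ H, actsOn h p (v ++ [false]) ∧ actsOn h q (v ++ [true]) ∧
      ∀ x ∈ S, ∃ y, actsOn h x y := by
  have hpq' : (⟨p, hp⟩ : S) ≠ ⟨q, hq⟩ := by simpa using hpq
  have hv : (⟨v ++ [false], h₀⟩ : S) ≠ ⟨v ++ [true], h₁⟩ := by simp
  obtain ⟨σ, hσp, hσq⟩ := MulAction.is_two_pretransitive_iff.mp
    (Equiv.Perm.isMultiplyPretransitive S 2) hpq' hv
  obtain ⟨h, hh, hσ⟩ := hS.exists_mem_actsOn_perm hH σ
  rw [Equiv.Perm.smul_def] at hσp hσq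
  refine ⟨h, hh, ?_, ?_, fun x hx => ⟨_, hσ ⟨x, hx⟩⟩⟩
  · simpa only [hσp] using hσ ⟨p, hp⟩
  · simpa only [hσq] using hσ ⟨q, hq⟩

/-- Permuting the image leaves by swaps, two sibling leaves of the domain can be carried to
siblings, and then both carets collapse. -/
lemma mem_of_forall_coneSwap_mem (hS : IsCode S) (hH : ∀ a b, coneSwap a b ∈ H)
    {g : Equiv.Perm Cantor} (hg : ∀ x ∈ S, ∃ y, actsOn g x y) : g ∈ H := by
  induction hn : S.card using Nat.strong_induction_on generalizing S g with
  | _ n ih =>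
  by_cases hg1 : g = 1
  · exact hg1 ▸ H.one_mem
  choose! f hf using hg
  have hT := hS.image hf
  have hfT {x : Addr} (hx : x ∈ S) : f x ∈ S.image f := Finset.mem_image_of_mem f hx
  have hnilS : [] ∉ S := fun h => hg1 (eq_one_of_actsOn_nil (hf _ h))
  have hnilT : [] ∉ S.image f := fun h => by
    obtain ⟨x, hx, hfx⟩ := Finset.mem_image.mp h
    exact hg1 (inv_eq_one.mp (eq_one_of_actsOn_nil (hfx ▸ (hf x hx).inv)))
  obtain ⟨u, hu₀, hu₁⟩ := hS.exists_siblings hnilS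
  obtain ⟨v, hv₀, hv₁⟩ := hT.exists_siblings hnilT
  have hne : f (u ++ [false]) ≠ f (u ++ [true]) := fun h =>
    ((hf _ hu₀).incomp (hf _ hu₁) (incomp_children u)).1 (h ▸ List.prefix_rfl)
  obtain ⟨h, hh, hact₀, hact₁, hact⟩ :=
    hT.exists_mem_actsOn_siblings hH (hfT hu₀) (hfT hu₁) hne hv₀ hv₁
  refine (H.mul_mem_cancel_left hh).mp <|
    ih _ (hn ▸ card_merge_lt hu₀ hu₁) (hS.merge hu₀ hu₁) (fun x hx => ?_) rfl
  obtain rfl | hx := Finset.mem_insert.mp hx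
  · exact ⟨v, reduced_actsOn _ _ _ (hact₀.mul (hf _ hu₀)) (hact₁.mul (hf _ hu₁))⟩
  · have hxS := (Finset.mem_sdiff.mp hx).1
    exact (hact _ (hfT hxS)).imp fun _ hy => hy.mul (hf x hxS)

end IsCode

lemma thompsonV_le {H : Subgroup (Equiv.Perm Cantor)} (hH : ∀ a b, coneSwap a b ∈ H) :
    thompsonV ≤ H := fun _ hg =>
  have ⟨_, hS, hgS⟩ := isPrefixSubst_iff_exists_isCode.mp (mem_thompsonV.mp hg)
  hS.mem_of_forall_coneSwap_mem hH hgS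
/-! ### Stabilizers of type systems -/

/-- `g` maps equivalent long addresses to equivalent addresses: the one-sided form of
`Stabilizes`. -/
def EventuallyPreserves (r : Addr → Addr → Prop) (g : Equiv.Perm Cantor) : Prop :=
  ∃ n, ∀ a b a' b' : Addr, n ≤ a.length → n ≤ b.length → actsOn g a a' → actsOn g b b' →
    r a b → r a' b'

section Stabilizer

variable {r : Addr → Addr → Prop} {g h : Equiv.Perm Cantor}

lemma finite_compl_setOf_le_length (n : ℕ) : {a : Addr | n ≤ a.length}ᶜ.Finite :=
  (List.finite_length_lt Bool n).subset fun _ ha => by simpa using ha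

lemma mem_stabSet_iff :
    g ∈ StabSet r ↔ g ∈ thompsonV ∧ EventuallyPreserves r g ∧ EventuallyPreserves r g⁻¹ := by
  constructor
  · rintro ⟨hg, S, hS, -, hst⟩
    obtain ⟨m, hm⟩ := (hS.image List.length).bddAbove
    have hlong {a : Addr} (ha : m < a.length) : a ∈ S := by
      by_contra haS
      exact ha.not_ge (hm ⟨a, haS, rfl⟩)
    obtain ⟨n, hn⟩ := isPrefixSubst_iff_exists_length.mp (thompsonV.inv_mem hg)
    refine ⟨hg, ⟨m + 1, fun a b a' b' ha hb haa hbb =>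
      (hst a (hlong ha) b (hlong hb) a' b' haa hbb).mp⟩,
      ⟨m + 1 + n, fun a b a' b' ha hb haa hbb => ?_⟩⟩
    have := haa.length_le hn
    have := hbb.length_le hn
    exact (hst a' (hlong (by omega)) b' (hlong (by omega)) a b
      (inv_inv g ▸ haa.inv) (inv_inv g ▸ hbb.inv)).mpr
  · rintro ⟨hg, ⟨m, hm⟩, ⟨m', hm'⟩⟩
    obtain ⟨n, hn⟩ := isPrefixSubst_iff_exists_length.mp hg
    refine ⟨hg, {a | m + m' + n ≤ a.length}, finite_compl_setOf_le_length _,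
      fun a ha => hn a (le_of_add_le_right ha), fun a ha b hb a' b' haa hbb => ?_⟩
    simp only [Set.mem_ofPred_eq] at ha hb
    have := haa.length_le hn
    have := hbb.length_le hn
    exact ⟨hm a b a' b' (by omega) (by omega) haa hbb,
      hm' a' b' a b (by omega) (by omega) haa.inv hbb.inv⟩

lemma eventuallyPreserves_one (r : Addr → Addr → Prop) : EventuallyPreserves r 1 :=
  ⟨0, fun a b a' b' _ _ haa hbb => by
    rw [haa.unique (actsOn_one a), hbb.unique (actsOn_one b)]
    exact id⟩

lemma EventuallyPreserves.mul (hg : EventuallyPreserves r g) (hh : EventuallyPreserves r h)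
    (hV : h ∈ thompsonV) : EventuallyPreserves r (g * h) := by
  obtain ⟨m, hm⟩ := hg
  obtain ⟨k, hk⟩ := hh
  obtain ⟨n, hn⟩ := isPrefixSubst_iff_exists_length.mp hV
  refine ⟨m + k + n, fun a b a' b' ha hb haa hbb hab => ?_⟩
  obtain ⟨c, hc⟩ := hn a (by omega)
  obtain ⟨d, hd⟩ := hn b (by omega)
  have := hc.length_le hn
  have := hd.length_le hn
  refine hm c d a' b' (by omega) (by omega) ?_ ?_ (hk a b c d (by omega) (by omega) hc hd hab)
  · exact mul_inv_cancel_right g h ▸ haa.mul hc.inv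
  · exact mul_inv_cancel_right g h ▸ hbb.mul hd.inv

lemma isSubgroupSet_stabSet (r : Addr → Addr → Prop) : IsSubgroupSet (StabSet r) := by
  simp only [IsSubgroupSet, mem_stabSet_iff, mul_inv_rev, inv_inv, inv_one]
  refine ⟨⟨thompsonV.one_mem, eventuallyPreserves_one r, eventuallyPreserves_one r⟩, ?_, ?_⟩
  · rintro g ⟨hgV, hg, hg'⟩ h ⟨hhV, hh, hh'⟩
    exact ⟨thompsonV.mul_mem hgV hhV, hg.mul hh hhV, hh'.mul hg' (thompsonV.inv_mem hgV)⟩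
  · rintro g ⟨hgV, hg, hg'⟩
    exact ⟨thompsonV.inv_mem hgV, hg', hg⟩

lemma coneSwap_mem_stabSet (hr : IsTypeSystem r) {a b : Addr} (hab : r a b) :
    coneSwap a b ∈ StabSet r := by
  have hfix {x : Addr} (hx : a.length + b.length ≤ x.length) :
      ∃ y, actsOn (coneSwap a b) x y ∧ r x y :=
    exists_actsOn_coneSwap hr hab (by omega) (by omega)
  refine ⟨coneSwap_mem_thompsonV a b, _, finite_compl_setOf_le_length (a.length + b.length),
    fun x hx => (hfix hx).imp fun _ => And.left, fun x hx y hy x' y' hxx hyy => ?_⟩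
  obtain ⟨_, hx', hrx⟩ := hfix hx
  obtain ⟨_, hy', hry⟩ := hfix hy
  obtain rfl := hxx.unique hx'
  obtain rfl := hyy.unique hy'
  exact ⟨fun h => hr.trans (hr.symm hrx) (hr.trans h hry),
    fun h => hr.trans hrx (hr.trans h (hr.symm hry))⟩

end Stabilizer

/-! ### Doubly recurrent addresses -/

/-- The type of `a` recurs at two incomparable places below `a`. -/
def DoublyRecurrent (r : Addr → Addr → Prop) (a : Addr) : Prop :=
  ∃ u v : Addr, Incomp u v ∧ r (a ++ u) a ∧ r (a ++ v) a

/-- All but finitely many addresses are doubly recurrent: the common feature of multinuclear and of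
branching quasinuclear type systems. -/
def EventuallyDoublyRecurrent (r : Addr → Addr → Prop) : Prop :=
  ∃ n, ∀ a : Addr, n ≤ a.length → DoublyRecurrent r a

namespace DoublyRecurrent

variable {r : Addr → Addr → Prop} {a b : Addr}

lemma congr (hr : IsTypeSystem r) (h : DoublyRecurrent r a) (hab : r a b) :
    DoublyRecurrent r b := by
  obtain ⟨u, v, huv, hu, hv⟩ := h
  have hba := hr.symm hab
  exact ⟨u, v, huv, hr.trans (hr.append hba u) (hr.trans hu hab),
    hr.trans (hr.append hba v) (hr.trans hv hab)⟩

/-- At most one of the two recurrences of `b` is a prefix of a given `x ++ η`, so one can always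
descend into the other. -/
lemma exists_append_incomp (hr : IsTypeSystem r) (hb : DoublyRecurrent r b) (F : Finset Addr) :
    ∃ m, ∀ η : Addr, m ≤ η.length →
      ∃ w, r (b ++ w) b ∧ ∀ x ∈ F, Incomp (b ++ w) (x ++ η) := by
  induction F using Finset.induction_on generalizing b with
  | empty => exact ⟨0, fun _ _ => ⟨[], by simpa using hr.refl b, by simp⟩⟩
  | insert x F _ ih =>
    obtain ⟨u, v, huv, hu, hv⟩ := id hb
    obtain ⟨m₁, h₁⟩ := ih (hb.congr hr (hr.symm hu))
    obtain ⟨m₂, h₂⟩ := ih (hb.congr hr (hr.symm hv))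
    refine ⟨m₁ + m₂ + (b ++ u).length + (b ++ v).length, fun η hη => ?_⟩
    have hlen : (x ++ η).length = x.length + η.length := List.length_append
    have descend {s : Addr} (hs : r (b ++ s) b) (hsx : Incomp (b ++ s) (x ++ η))
        (h : ∃ w, r (b ++ s ++ w) (b ++ s) ∧ ∀ y ∈ F, Incomp (b ++ s ++ w) (y ++ η)) :
        ∃ w, r (b ++ w) b ∧ ∀ y ∈ insert x F, Incomp (b ++ w) (y ++ η) := by
      obtain ⟨w, hw, hF⟩ := h
      refine ⟨s ++ w, ?_⟩
      rw [← List.append_assoc, Finset.forall_mem_insert]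
      exact ⟨hr.trans hw hs, hsx.append_left w, hF⟩
    by_cases hpre : b ++ u <+: x ++ η
    · have hpre' : ¬ b ++ v <+: x ++ η := fun hpre' =>
        have hbuv : Incomp (b ++ u) (b ++ v) := incomp_append_left_iff.mpr huv
        (List.prefix_or_prefix_of_prefix hpre hpre').elim hbuv.1 hbuv.2
      exact descend hv (incomp_of_not_prefix (by omega) hpre') (h₂ η (by omega))
    · exact descend hu (incomp_of_not_prefix (by omega) hpre) (h₁ η (by omega))

end DoublyRecurrent

lemma rel_of_coneSwap_mem_stabSet {r : Addr → Addr → Prop} (hr : IsTypeSystem r) {a b y : Addr}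
    (hay : Incomp a y) (hba : Incomp b a) (hby : Incomp b y) (h : coneSwap a y ∈ StabSet r)
    (hab : r a b) : r y b := by
  obtain ⟨n, hn⟩ := (mem_stabSet_iff.mp h).2.1
  exact hr.of_forall_append n fun c hc =>
    hn (a ++ c) (b ++ c) _ _ (by simp [hc]) (by simp [hc]) ((actsOn_coneSwap_left hay).append c)
      ((actsOn_coneSwap_of_incomp hba hby).append c) (hr.append hab c)

lemma rel_of_forall_coneSwap_mem_stabSet {r : Addr → Addr → Prop} (hr : IsTypeSystem r)
    (hrec : EventuallyDoublyRecurrent r) (h : ∀ a b, coneSwap a b ∈ StabSet r) (a b : Addr) :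
    r a b := by
  obtain ⟨n, hn⟩ := hrec
  suffices hlong : ∀ y b : Addr, n ≤ b.length → r y b from
    hr.of_forall_append n fun c hc => hlong _ _ (by simp [hc])
  intro y b hb
  obtain ⟨u, v, huv, hu, hv⟩ := hn b hb
  obtain ⟨m₁, h₁⟩ := ((hn b hb).congr hr (hr.symm hu)).exists_append_incomp hr {y}
  obtain ⟨m₂, h₂⟩ := ((hn b hb).congr hr (hr.symm hv)).exists_append_incomp hr {y}
  refine hr.of_forall_append (m₁ + m₂) fun η hη => ?_
  obtain ⟨w₁, hw₁, hy₁⟩ := h₁ η (by omega)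
  obtain ⟨w₂, hw₂, hy₂⟩ := h₂ η (by omega)
  simp only [Finset.mem_singleton, forall_eq] at hy₁ hy₂
  have hub := hr.append (hr.trans hw₁ hu) η
  have hvb := hr.append (hr.trans hw₂ hv) η
  have hvu : Incomp (b ++ v) (b ++ u) := incomp_append_left_iff.mpr huv.symm
  exact hr.trans (rel_of_coneSwap_mem_stabSet hr (hy₁.append_left η)
    ((hvu.append w₂ w₁).append η η) (hy₂.append_left η) (h _ _)
    (hr.trans hub (hr.symm hvb))) hvb

/-! ### The quotient attached to an overgroup -/

/-- `a` and `b` are swap related if, for every `c`, each address of the type of `ac` can be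
exchanged with each address of the type of `bc` by a cone swap in `H`. If `H` contains the cone
swaps of equivalent addresses, this is a quotient of the type system `r`. -/
def SwapRel (r : Addr → Addr → Prop) (H : Subgroup (Equiv.Perm Cantor)) (a b : Addr) : Prop :=
  ∀ c x y : Addr, r (a ++ c) x → r (b ++ c) y → coneSwap x y ∈ H

section SwapRel

variable {r : Addr → Addr → Prop} {H : Subgroup (Equiv.Perm Cantor)} {a b c x y : Addr}

namespace SwapRel

lemma coneSwap_mem (h : SwapRel r H a b) (hx : r a x) (hy : r b y) : coneSwap x y ∈ H :=
  h [] x y (by rwa [List.append_nil]) (by rwa [List.append_nil])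

lemma append (h : SwapRel r H a b) (c : Addr) : SwapRel r H (a ++ c) (b ++ c) :=
  fun d x y hx hy => h (c ++ d) x y (by rwa [← List.append_assoc]) (by rwa [← List.append_assoc])

lemma symm (h : SwapRel r H a b) : SwapRel r H b a := fun c x y hx hy =>
  coneSwap_comm x y ▸ h c y x hy hx

lemma of_rel (hr : IsTypeSystem r) (hH : ∀ ⦃x y⦄, r x y → coneSwap x y ∈ H) (h : r a b) :
    SwapRel r H a b := fun c _ _ hx hy =>
  hH (hr.trans (hr.symm hx) (hr.trans (hr.append h c) hy))

lemma trans (hr : IsTypeSystem r) (hrec : EventuallyDoublyRecurrent r) (hab : SwapRel r H a b)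
    (hbc : SwapRel r H b c) : SwapRel r H a c := fun d x z hx hz => by
  obtain ⟨n, hn⟩ := hrec
  refine (reduced_coneSwap_mem H).of_forall_append n fun ζ hζ => ?_
  have hlen : n ≤ (b ++ d ++ ζ).length := by
    rw [List.length_append]
    omega
  obtain ⟨m, hm⟩ := (hn _ hlen).exists_append_incomp hr {x ++ ζ, z ++ ζ}
  refine (reduced_coneSwap_mem H).of_forall_append m fun η hη => ?_
  obtain ⟨w, hw, hinc⟩ := hm η hη.ge
  have hy := hr.append (hr.symm hw) η
  have hx' := hr.append (hr.append hx ζ) η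
  have hz' := hr.append (hr.append hz ζ) η
  exact coneSwap_mem_trans ((hinc _ (by simp)).append_left η).symm
    ((hinc _ (by simp)).append_left η)
    ((((hab.append d).append ζ).append η).coneSwap_mem hx' hy)
    ((((hbc.append d).append ζ).append η).coneSwap_mem hy hz')

lemma of_children (hr : Coherent r) (h₀ : SwapRel r H (a ++ [false]) (b ++ [false]))
    (h₁ : SwapRel r H (a ++ [true]) (b ++ [true])) : SwapRel r H a b := by
  rintro (_ | ⟨e, c⟩) x y hx hy
  · rw [List.append_nil] at hx hy
    exact reduced_coneSwap_mem H x y (h₀.coneSwap_mem (hr.append hx _) (hr.append hy _))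
      (h₁.coneSwap_mem (hr.append hx _) (hr.append hy _))
  · rw [List.append_cons] at hx hy
    cases e
    exacts [h₀ c x y hx hy, h₁ c x y hx hy]

lemma isQuotientOf (hr : IsTypeSystem r) (hrec : EventuallyDoublyRecurrent r)
    (hH : ∀ ⦃x y⦄, r x y → coneSwap x y ∈ H) : IsQuotientOf (SwapRel r H) r :=
  ⟨⟨⟨fun a => of_rel hr hH (hr.refl a), symm, trans hr hrec⟩,
    fun _ _ h => ⟨h.append _, h.append _⟩, fun _ _ => of_children hr.2.1⟩,
    fun _ _ => of_rel hr hH⟩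

end SwapRel

/-- The swap is composed along the chain `x`, `e`, `a`, `b`, `f`, `y`, where `e` and `f` are
recurrences of `a` and `b` chosen so that every composition involves disjoint cones only. -/
lemma coneSwap_mem_of_doublyRecurrent (hr : IsTypeSystem r)
    (hH : ∀ ⦃x y⦄, r x y → coneSwap x y ∈ H) (ha : DoublyRecurrent r a)
    (hb : DoublyRecurrent r b) (hab : Incomp a b) (h : ∀ c, coneSwap (a ++ c) (b ++ c) ∈ H)
    (hx : r a x) (hy : r b y) : coneSwap x y ∈ H := by
  obtain ⟨m₁, h₁⟩ := ha.exists_append_incomp hr {a, b, x, y}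
  obtain ⟨m₂, h₂⟩ := hb.exists_append_incomp hr {b, y}
  refine (reduced_coneSwap_mem H).of_forall_append (m₁ + m₂) fun η hη => ?_
  obtain ⟨w₁, hw₁, he⟩ := h₁ η (by omega)
  obtain ⟨w₂, hw₂, hf⟩ := h₂ η (by omega)
  simp only [Finset.mem_insert, Finset.mem_singleton, forall_eq_or_imp, forall_eq] at he hf
  obtain ⟨hea, heb, hex, hey⟩ := he
  obtain ⟨hfb, hfy⟩ := hf
  set e := a ++ w₁
  set f := b ++ w₂
  have swap_ea : coneSwap (e ++ η) (a ++ η) ∈ H := hH (hr.append hw₁ η)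
  have swap_bf : coneSwap (b ++ η) (f ++ η) ∈ H := hH (hr.append (hr.symm hw₂) η)
  have swap_xe : coneSwap (x ++ η) (e ++ η) ∈ H :=
    hH (hr.append (hr.trans (hr.symm hx) (hr.symm hw₁)) η)
  have swap_fy : coneSwap (f ++ η) (y ++ η) ∈ H := hH (hr.append (hr.trans hw₂ hy) η)
  have swap_eb : coneSwap (e ++ η) (b ++ η) ∈ H :=
    coneSwap_mem_trans (hea.append_left η) (hab.append η η) swap_ea (h η)
  have swap_ef : coneSwap (e ++ η) (f ++ η) ∈ H :=
    coneSwap_mem_trans (heb.append_left η) (hfb.append_left η).symm swap_eb swap_bf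
  have swap_ey : coneSwap (e ++ η) (y ++ η) ∈ H :=
    coneSwap_mem_trans ((hab.append w₁ w₂).append η η) (hfy.append_left η) swap_ef swap_fy
  exact coneSwap_mem_trans (hex.append_left η).symm (hey.append_left η) swap_xe swap_ey

lemma swapRel_of_incomp (hr : IsTypeSystem r) (hH : ∀ ⦃x y⦄, r x y → coneSwap x y ∈ H) {n : ℕ}
    (hn : ∀ a : Addr, n ≤ a.length → DoublyRecurrent r a) (ha : n ≤ a.length)
    (hb : n ≤ b.length) (hab : Incomp a b) (h : ∀ c, coneSwap (a ++ c) (b ++ c) ∈ H) :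
    SwapRel r H a b := fun c _ _ =>
  have hlen {d : Addr} (hd : n ≤ d.length) : n ≤ (d ++ c).length :=
    hd.trans (List.length_append ▸ Nat.le_add_right _ _)
  coneSwap_mem_of_doublyRecurrent hr hH (hn _ (hlen ha)) (hn _ (hlen hb)) (hab.append c c)
    fun d => by simpa only [List.append_assoc] using h (c ++ d)

lemma eventuallyPreserves_of_mem (hr : IsTypeSystem r) (hrec : EventuallyDoublyRecurrent r)
    (hH : ∀ ⦃x y⦄, r x y → coneSwap x y ∈ H) (hSwap : ∀ a b, SwapRel r H a b → r a b)
    {g : Equiv.Perm Cantor} (hg : g ∈ H) (hgV : g ∈ thompsonV) : EventuallyPreserves r g := by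
  obtain ⟨n, hn⟩ := hrec
  obtain ⟨k, hk⟩ := isPrefixSubst_iff_exists_length.mp hgV
  have of_incomp {a b a' b' : Addr} (ha : n + k ≤ a.length) (hb : n + k ≤ b.length)
      (haa : actsOn g a a') (hbb : actsOn g b b') (hinc : Incomp a b) (hab : r a b) :
      r a' b' := by
    have := haa.length_le hk
    have := hbb.length_le hk
    refine hSwap _ _ (swapRel_of_incomp hr hH hn (by omega) (by omega)
      (haa.incomp hbb hinc) fun c => ?_)
    rw [← mul_coneSwap_mul_inv (hinc.append c c) (haa.append c) (hbb.append c)]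
    exact H.mul_mem (H.mul_mem hg (hH (hr.append hab c))) (H.inv_mem hg)
  refine ⟨n + k, fun a b a' b' ha hb haa hbb hab => ?_⟩
  obtain ⟨m, hm⟩ := (hn a (by omega)).exists_append_incomp hr {a, b}
  refine hr.of_forall_append m fun η hη => ?_
  obtain ⟨w, hw, hinc⟩ := hm η hη.ge
  have hlen {c : Addr} (hc : n + k ≤ c.length) (s : Addr) : n + k ≤ (c ++ s).length := by
    rw [List.length_append]
    omega
  obtain ⟨d, hd⟩ := hk (a ++ w ++ η) (by have := hlen (hlen ha w) η; omega)
  have had : r (a' ++ η) d :=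
    of_incomp (hlen ha η) (hlen (hlen ha w) η) (haa.append η) hd
      ((hinc a (by simp)).append_left η).symm (hr.append (hr.symm hw) η)
  have hdb : r d (b' ++ η) :=
    of_incomp (hlen (hlen ha w) η) (hlen hb η) hd (hbb.append η)
      ((hinc b (by simp)).append_left η) (hr.append (hr.trans hw hab) η)
  exact hr.trans had hdb

end SwapRel

/-! ### Nuclei are doubly recurrent -/

lemma IsNucleus.doublyRecurrent {r : Addr → Addr → Prop} {S : Set Addr} (hS : IsNucleus r S)
    {a : Addr} (ha : a ∈ S) : DoublyRecurrent r a := by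
  obtain ⟨-, -, hchild, hconn⟩ := hS
  obtain ⟨c, -, -, hc⟩ := hconn _ (hchild a ha).1 a ha
  obtain ⟨d, -, -, hd⟩ := hconn _ (hchild a ha).2 a ha
  refine ⟨[false] ++ c, [true] ++ d, (incomp_children []).append c d, ?_, ?_⟩
  · rwa [← List.append_assoc]
  · rwa [← List.append_assoc]

lemma StronglyConnected.doublyRecurrent {r : Addr → Addr → Prop} (hr : IsTypeSystem r)
    {Q : Set Addr} (hQ : StronglyConnected r Q) (hbr : (QDagger Q).Nonempty) {a : Addr}
    (ha : a ∈ Q) : DoublyRecurrent r a := by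
  obtain ⟨q, hq, hq₀, hq₁⟩ := hbr
  obtain ⟨c, -, -, hc⟩ := hQ a ha q hq
  obtain ⟨d, -, -, hd⟩ := hQ _ hq₀ a ha
  obtain ⟨e, -, -, he⟩ := hQ _ hq₁ a ha
  refine ⟨c ++ [false] ++ d, c ++ [true] ++ e, (incomp_children c).append d e, ?_, ?_⟩
  · simpa only [List.append_assoc] using
      hr.trans (hr.append (hr.append hc [false]) d) hd
  · simpa only [List.append_assoc] using
      hr.trans (hr.append (hr.append hc [true]) e) he

lemma Multinuclear.eventuallyDoublyRecurrent {r : Addr → Addr → Prop} (h : Multinuclear r) :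
    EventuallyDoublyRecurrent r := by
  obtain ⟨k, Q, -, hQ, -, t, -, ht⟩ := h
  refine ⟨t, fun a ha => ?_⟩
  obtain ⟨i, hi⟩ := ht a ha
  exact (hQ i).doublyRecurrent hi

lemma QuasinuclearData.eventuallyDoublyRecurrent {r : Addr → Addr → Prop} {Q R : Set Addr}
    (hr : IsTypeSystem r) (h : QuasinuclearData r Q R) (hbr : (QDagger Q).Nonempty) :
    EventuallyDoublyRecurrent r := by
  obtain ⟨-, -, -, -, -, ⟨t, -, ht⟩, hR, hQ, -, -⟩ := h
  exact ⟨t, fun a ha => (ht a ha).elim (hQ.doublyRecurrent hr hbr) hR.doublyRecurrent⟩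

/-! ### Maximality of the stabilizer -/

lemma IsSubgroupSet.exists_coe_eq {M : Set (Equiv.Perm Cantor)} (hM : IsSubgroupSet M) :
    ∃ H : Subgroup (Equiv.Perm Cantor), (H : Set (Equiv.Perm Cantor)) = M :=
  ⟨{ carrier := M
     one_mem' := hM.1
     mul_mem' := fun {g h} hg hh => hM.2.1 g hg h hh
     inv_mem' := fun {g} hg => hM.2.2 g hg }, rfl⟩

lemma stabSet_ne_vSet {r : Addr → Addr → Prop} (hr : IsTypeSystem r)
    (hrec : EventuallyDoublyRecurrent r) (hne : ∃ a b, ¬ r a b) : StabSet r ≠ VSet := fun h => by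
  obtain ⟨a, b, hab⟩ := hne
  exact hab (rel_of_forall_coneSwap_mem_stabSet hr hrec
    (fun c d => h.ge (coneSwap_mem_thompsonV c d)) a b)

theorem stabSet_isMaximal_of_multinuclear_or_atomicBranchingQuasinuclear_general
    {r : Addr → Addr → Prop} (hr : SimpleTS r) (hrec : EventuallyDoublyRecurrent r) :
    IsMaximalSubgroupOfV (StabSet r) := by
  refine ⟨isSubgroupSet_stabSet r, fun g hg => hg.1, stabSet_ne_vSet hr.1 hrec hr.2.1,
    fun M hM hStab hV => ?_⟩
  obtain ⟨H, rfl⟩ := hM.exists_coe_eq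
  have hH : ∀ ⦃a b⦄, r a b → coneSwap a b ∈ H := fun a b hab =>
    hStab (coneSwap_mem_stabSet hr.1 hab)
  rcases hr.2.2 _ (SwapRel.isQuotientOf hr.1 hrec hH) with hSwap | hSwap
  · have hpres {g} (hg : g ∈ H) : EventuallyPreserves r g :=
      eventuallyPreserves_of_mem hr.1 hrec hH (fun a b => (hSwap a b).mp) hg (hV hg)
    exact .inl <| Set.Subset.antisymm
      (fun g hg => mem_stabSet_iff.mpr ⟨hV hg, hpres hg, hpres (H.inv_mem hg)⟩) hStab
  · exact .inr <| Set.Subset.antisymm hV <|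
      thompsonV_le fun a b => (hSwap a b).coneSwap_mem (hr.1.refl a) (hr.1.refl b)

/-- If a simple type system is multinuclear or atomic branching
quasinuclear, then `Stab_V(𝒫)` is a maximal subgroup of Thompson's group `V`. -/
theorem stabSet_isMaximal_of_multinuclear_or_atomicBranchingQuasinuclear
    (r : Addr → Addr → Prop) (hr : SimpleTS r)
    (h : Multinuclear r ∨
      ∃ Q R : Set Addr, QuasinuclearData r Q R ∧ IsSingleType r R ∧
        (QDagger Q).Nonempty) :
    IsMaximalSubgroupOfV (StabSet r) := by
  rcases h with h | ⟨Q, R, hQR, -, hbr⟩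
  · exact stabSet_isMaximal_of_multinuclear_or_atomicBranchingQuasinuclear_general hr
      h.eventuallyDoublyRecurrent
  · exact stabSet_isMaximal_of_multinuclear_or_atomicBranchingQuasinuclear_general hr
      (hQR.eventuallyDoublyRecurrent hr.1 hbr)
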